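/- Let T ∈ (0,∞], A < 0, and let λ : [0,T) → ℝ be a C² function with λ(0) = 0, λ′(0) ≠ 0, such that λ″(t) ≠ 0 and λ′(t)³ = A·λ″(t) for all t ∈ [0,T). Then there exist c ∈ ℝ∖{0} with c² = −2A and τ > 0 such that λ(t) = c√(τ+t) − c√τ for all t ∈ [0,T); moreover τ = −A/(2·λ′(0)²) and c has the same sign as λ′(0). -/

import Mathlib

/-!
Write `p = λ'`. Since `p³ = A λ''` never vanishes, `p` has constant sign on the interval `[0,T)`,
and the equation integrates twice in closed form: `(1/p²)' = -2/A` and `(1/p + λ/A)' = 0`.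
With `a = p(0)` and `τ = -A/(2a²)` the first integral says `τ + t = -A/(2p²)`, and the second
says `λ = A/a - A/p`. For `c = 2a√τ` one gets `c√τ = -A/a`, and, because `a` and `p` have
the same sign, `c√(τ+t) = -A/p`.
-/

/-- The domain `[0,T)` of a driving function, for `T ∈ (0,∞]`. -/
def drivingDomain (T : EReal) : Set ℝ := {t : ℝ | 0 ≤ t ∧ (t : EReal) < T}

theorem convex_drivingDomain (T : EReal) : Convex ℝ (drivingDomain T) := by
  apply Set.OrdConnected.convex
  refine ⟨fun x hx y hy z hz => ⟨hx.1.trans hz.1, lt_of_le_of_lt ?_ hy.2⟩⟩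
  exact_mod_cast hz.2

theorem uniqueDiffOn_drivingDomain {T : EReal} (hT : 0 < T) :
    UniqueDiffOn ℝ (drivingDomain T) := by
  apply uniqueDiffOn_convex (convex_drivingDomain T)
  obtain ⟨r, hr0, hrT⟩ := EReal.lt_iff_exists_real_btwn.1 hT
  have hr : 0 < r := by exact_mod_cast hr0
  refine ⟨r / 2, interior_maximal (s := drivingDomain T) (t := Set.Ioo 0 r) ?_ isOpen_Ioo
    ⟨by linarith, by linarith⟩⟩
  intro x hx
  refine ⟨hx.1.le, lt_trans ?_ hrT⟩
  exact_mod_cast hx.2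

theorem eq_of_hasDerivWithinAt_zero {s : Set ℝ} (hs : Convex ℝ s) {f : ℝ → ℝ}
    (hf : ∀ x ∈ s, HasDerivWithinAt f 0 s x) {x y : ℝ} (hx : x ∈ s) (hy : y ∈ s) :
    f y = f x := by
  have h := hs.norm_image_sub_le_of_norm_hasDerivWithin_le (C := 0) hf (by simp) hx hy
  rw [zero_mul, norm_le_zero_iff] at h
  linarith

/-- Solution of the constant negative Loewner curvature ODE `λ'³ = A λ''` (`A < 0`),
from the proof of Theorem 3.2: on `[0,T)` (`T ∈ (0,∞]`) such a `λ` (with `λ(0) = 0`,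
`λ'(0) ≠ 0`) must equal `c √(τ + t) - c √τ` with `c² = -2A`, `τ = -A/(2 λ'(0)²) > 0`,
and `c` of the same sign as `λ'(0)`. -/
theorem constant_negative_curvature_ode
    (T : EReal) (A : ℝ) (hT : 0 < T) (hA : A < 0) (l : ℝ → ℝ)
    (hC2 : ContDiffOn ℝ 2 l (drivingDomain T))
    (h0 : l 0 = 0)
    (h'0 : derivWithin l (drivingDomain T) 0 ≠ 0)
    (hode : ∀ t : ℝ, 0 ≤ t → (t : EReal) < T →
      derivWithin (derivWithin l (drivingDomain T)) (drivingDomain T) t ≠ 0 ∧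
      (derivWithin l (drivingDomain T) t) ^ 3
        = A * derivWithin (derivWithin l (drivingDomain T)) (drivingDomain T) t) :
    ∃ c τ : ℝ, c ≠ 0 ∧ c ^ 2 = -(2 * A) ∧ 0 < τ ∧
      τ = -A / (2 * (derivWithin l (drivingDomain T) 0) ^ 2) ∧
      (0 < c ↔ 0 < derivWithin l (drivingDomain T) 0) ∧
      ∀ t : ℝ, 0 ≤ t → (t : EReal) < T →
        l t = c * Real.sqrt (τ + t) - c * Real.sqrt τ := by
  have hconv := convex_drivingDomain T
  have huniq := uniqueDiffOn_drivingDomain hT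
  have hmem0 : (0 : ℝ) ∈ drivingDomain T := ⟨le_rfl, by simpa using hT⟩
  set S := drivingDomain T with hS
  set p := derivWithin l S with hp
  have hl : ∀ t ∈ S, HasDerivWithinAt l (p t) S t := fun t ht =>
    ((hC2.differentiableOn (by norm_num)) t ht).hasDerivWithinAt
  have hpC : ContDiffOn ℝ 1 p S := hC2.derivWithin huniq (by norm_num)
  have hpd : ∀ t ∈ S, HasDerivWithinAt p (p t ^ 3 / A) S t := by
    intro t ht
    have h := ((hpC.differentiableOn (by norm_num)) t ht).hasDerivWithinAt
    rwa [(hode t ht.1 ht.2).2, mul_div_cancel_left₀ _ hA.ne]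
  have hpne : ∀ t ∈ S, p t ≠ 0 := by
    intro t ht h
    obtain ⟨h1, h2⟩ := hode t ht.1 ht.2
    rw [h] at h2
    have h3 := mul_ne_zero hA.ne h1
    exact h3 (by rw [← h2]; norm_num)
  have hsign : ∀ t ∈ S, 0 < p 0 * p t := by
    intro t ht
    by_contra! hneg
    have hcont : ContinuousOn (fun x => p 0 * p x) S := continuousOn_const.mul hpC.continuousOn
    obtain ⟨x, hx, hx0⟩ := hconv.isPreconnected.intermediate_value ht hmem0 hcont
      ⟨hneg, mul_self_nonneg (p 0)⟩
    exact mul_ne_zero h'0 (hpne x hx) hx0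
  have hfirst : ∀ t ∈ S, (p t ^ 2)⁻¹ + 2 * t / A = (p 0 ^ 2)⁻¹ := by
    intro t ht
    have h := eq_of_hasDerivWithinAt_zero hconv
      (f := fun x => (p x ^ 2)⁻¹ + 2 * x / A) (fun x hx => ?_) hmem0 ht
    · simpa using h
    · have hx0 := hpne x hx
      have hA0 := hA.ne
      refine ((((hpd x hx).fun_pow 2).fun_inv (pow_ne_zero 2 hx0)).fun_add
        (((hasDerivWithinAt_id x S).const_mul 2).div_const A)).congr_deriv ?_
      field_simp
      ring
  have hsecond : ∀ t ∈ S, (p t)⁻¹ + l t / A = (p 0)⁻¹ := by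
    intro t ht
    have h := eq_of_hasDerivWithinAt_zero hconv
      (f := fun x => (p x)⁻¹ + l x / A) (fun x hx => ?_) hmem0 ht
    · simpa [h0] using h
    · have hx0 := hpne x hx
      have hA0 := hA.ne
      refine (((hpd x hx).fun_inv hx0).fun_add ((hl x hx).div_const A)).congr_deriv ?_
      field_simp
      ring
  have ha2 : 0 < p 0 ^ 2 := by positivity
  have hτ : 0 < -A / (2 * p 0 ^ 2) := div_pos (by linarith) (by positivity)
  have hsτ := Real.sqrt_pos.2 hτ
  have hsq := Real.sq_sqrt hτ.le
  refine ⟨2 * p 0 * √(-A / (2 * p 0 ^ 2)), -A / (2 * p 0 ^ 2), by positivity, ?_, hτ, rfl, ?_, ?_⟩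
  · rw [mul_pow, hsq]
    field_simp
  · rw [mul_pos_iff_of_pos_right hsτ, mul_pos_iff_of_pos_left two_pos]
  · intro t ht0 htT
    have ht : t ∈ S := ⟨ht0, htT⟩
    have hpt := hpne t ht
    have hA0 := hA.ne
    have hst := hsign t ht
    have hadd : -A / (2 * p 0 ^ 2) + t = -A / (2 * p t ^ 2) := by
      have h := hfirst t ht
      field_simp at h ⊢
      linarith
    -- The positivity of `p 0 * p t` selects the correct branch of the square root.
    have hprod : √(-A / (2 * p 0 ^ 2)) * √(-A / (2 * p 0 ^ 2) + t) = -A / (2 * (p 0 * p t)) := by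
      rw [← Real.sqrt_mul hτ.le, hadd,
        show -A / (2 * p 0 ^ 2) * (-A / (2 * p t ^ 2)) = (-A / (2 * (p 0 * p t))) ^ 2 by field_simp]
      exact Real.sqrt_sq (div_nonneg (by linarith) (by positivity))
    rw [mul_assoc (2 * p 0), hprod, mul_assoc (2 * p 0), ← sq, hsq]
    have h := hsecond t ht
    field_simp at h ⊢
    linarith
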